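/- Let Λ_c(α) = sup_{a ∈ (0, π)} 8 e^{-(2a/α) tan(a/2)} sin²(a/2) for α > 0. Then Λ_c(α)/α → 2/e as α → 0⁺. -/

import Mathlib

/-!
Put `x = a ^ 2 / α`. For small `a` both `tan (a / 2)` and `sin (a / 2)` are close to `a / 2`, so the
function under the supremum is approximately `2 α x e^{-x}`. Since `sin (a / 2) ≤ a / 2` and
`a / 2 ≤ tan (a / 2)`, this is in fact an upper bound on `(0, π)`, hence so is `2 α / e`, because
`x e^{-x}` has maximum `e⁻¹`, attained at `x = 1`. The point `a = √α`, where `x = 1`, tends to `0`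
with `α`, so the bound is asymptotically sharp.
-/

open Real Set Filter

/-- The critical heating parameter Λ_c(α) for the voltage-controlled axial problem. -/
noncomputable def LambdaCrit (α : ℝ) : ℝ :=
  sSup ((fun a : ℝ => 8 * Real.exp (-(2 * a / α) * Real.tan (a / 2)) *
    Real.sin (a / 2) ^ 2) '' Set.Ioo 0 Real.pi)

lemma mul_sinc (x : ℝ) : x * sinc x = sin x := by
  rcases eq_or_ne x 0 with rfl | hx
  · simp
  · rw [sinc_of_ne_zero hx, mul_div_cancel₀ _ hx]

lemma mul_sinc_div_cos (x : ℝ) : x * (sinc x / cos x) = tan x := by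
  rw [← mul_div_assoc, mul_sinc, tan_eq_sin_div_cos]

lemma one_le_sinc_div_cos {x : ℝ} (hx : |x| < π / 2) : 1 ≤ sinc x / cos x := by
  wlog hx_nonneg : 0 ≤ x generalizing x
  · simpa using this (x := -x) (by rwa [abs_neg]) (by linarith)
  rcases hx_nonneg.eq_or_lt with rfl | hx_pos
  · simp
  · refine le_of_mul_le_mul_left ?_ hx_pos
    rw [mul_one, mul_sinc_div_cos]
    exact le_tan hx_nonneg (lt_of_abs_lt hx)

/-- The heating parameter `Λ = λ / δ ^ 2` for which the problem with cooling rate `α` has a steady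
state of the form `θ z = θ 0 + 2 * log (cos (a * z))`. -/
noncomputable def heating (α a : ℝ) : ℝ :=
  8 * exp (-(2 * a / α) * tan (a / 2)) * sin (a / 2) ^ 2

lemma LambdaCrit_eq_sSup_heating (α : ℝ) : LambdaCrit α = sSup (heating α '' Ioo 0 π) := rfl

lemma heating_eq_sinc {α : ℝ} (hα : α ≠ 0) (a : ℝ) :
    heating α a = 2 * α * (a ^ 2 / α * exp (-(a ^ 2 / α * (sinc (a / 2) / cos (a / 2)))) *
      sinc (a / 2) ^ 2) := by
  have exponent_eq : -(2 * a / α) * tan (a / 2) =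
      -(a ^ 2 / α * (sinc (a / 2) / cos (a / 2))) := by
    rw [← mul_sinc_div_cos]
    ring
  rw [heating, exponent_eq, ← mul_sinc]
  field_simp
  ring

lemma heating_le {α a : ℝ} (hα : 0 < α) (ha : |a| < π) : heating α a ≤ 2 * α * exp (-1) := by
  have half_lt : |a / 2| < π / 2 := by
    rw [abs_div, abs_two]
    gcongr
  have one_le : 1 ≤ sinc (a / 2) / cos (a / 2) := one_le_sinc_div_cos half_lt
  have sinc_sq_le : sinc (a / 2) ^ 2 ≤ 1 := (sq_le_one_iff_abs_le_one _).2 (abs_sinc_le_one _)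
  calc heating α a
      = 2 * α * (a ^ 2 / α * exp (-(a ^ 2 / α * (sinc (a / 2) / cos (a / 2)))) *
          sinc (a / 2) ^ 2) := heating_eq_sinc hα.ne' a
    _ ≤ 2 * α * (a ^ 2 / α * exp (-(a ^ 2 / α * 1)) * 1) := by gcongr
    _ = 2 * α * (a ^ 2 / α * exp (-(a ^ 2 / α))) := by simp only [mul_one]
    _ ≤ 2 * α * exp (-1) := by
        gcongr
        exact mul_exp_neg_le_exp_neg_one _

lemma mem_upperBounds_heating_image {α : ℝ} (hα : 0 < α) :
    2 * α * exp (-1) ∈ upperBounds (heating α '' Ioo 0 π) :=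
  forall_mem_image.2 fun _ ha ↦ heating_le hα ((abs_of_pos ha.1).trans_lt ha.2)

lemma LambdaCrit_le {α : ℝ} (hα : 0 < α) : LambdaCrit α ≤ 2 * α * exp (-1) :=
  (LambdaCrit_eq_sSup_heating α).trans_le <|
    csSup_le ((nonempty_Ioo.2 pi_pos).image _) (mem_upperBounds_heating_image hα)

lemma heating_le_LambdaCrit {α a : ℝ} (hα : 0 < α) (ha : a ∈ Ioo 0 π) :
    heating α a ≤ LambdaCrit α :=
  (LambdaCrit_eq_sSup_heating α).symm ▸
    le_csSup ⟨_, mem_upperBounds_heating_image hα⟩ (mem_image_of_mem _ ha)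

lemma tendsto_heating_sqrt_mul_div {x : ℝ} (hx : 0 ≤ x) :
    Tendsto (fun α ↦ heating α √(x * α) / α) (nhdsWithin 0 (Ioi 0))
      (nhds (2 * (x * exp (-x)))) := by
  let rescaled : ℝ → ℝ := fun a ↦
    2 * (x * exp (-(x * (sinc (a / 2) / cos (a / 2)))) * sinc (a / 2) ^ 2)
  have rescaled_sqrt : ContinuousAt (fun α ↦ rescaled √(x * α)) 0 := by
    have cos_ne_zero : cos (√(x * 0) / 2) ≠ 0 := by simp
    fun_prop (disch := assumption)
  have rescaled_zero : rescaled √(x * 0) = 2 * (x * exp (-x)) := by simp [rescaled]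
  rw [← rescaled_zero]
  refine (rescaled_sqrt.tendsto.mono_left nhdsWithin_le_nhds).congr' ?_
  filter_upwards [self_mem_nhdsWithin] with α (hα : 0 < α)
  have sq_div : √(x * α) ^ 2 / α = x := by
    rw [sq_sqrt (by positivity), mul_div_cancel_right₀ _ hα.ne']
  rw [heating_eq_sinc hα.ne', sq_div]
  simp only [rescaled]
  field_simp

/-- Λ_c(α)/α → 2/e as α → 0⁺. -/
theorem LambdaCrit_small_alpha :
    Filter.Tendsto (fun α : ℝ => LambdaCrit α / α) (nhdsWithin 0 (Set.Ioi 0))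
      (nhds (2 / Real.exp 1)) := by
  have limit_eq : 2 / exp 1 = 2 * (1 * exp (-1)) := by rw [one_mul, exp_neg, div_eq_mul_inv]
  rw [limit_eq]
  refine tendsto_of_tendsto_of_tendsto_of_le_of_le' (tendsto_heating_sqrt_mul_div zero_le_one)
    tendsto_const_nhds ?lower ?upper
  case lower =>
    filter_upwards [Ioo_mem_nhdsGT one_pos] with α ⟨hα, hα_lt_one⟩
    have sqrt_le_one : √(1 * α) ≤ 1 := by simpa using hα_lt_one.le
    have sqrt_mem : √(1 * α) ∈ Ioo 0 π := ⟨by positivity, by linarith [pi_gt_three]⟩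
    gcongr
    exact heating_le_LambdaCrit hα sqrt_mem
  case upper =>
    filter_upwards [self_mem_nhdsWithin] with α (hα : 0 < α)
    rw [div_le_iff₀ hα]
    linarith [LambdaCrit_le hα]
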